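/- For every φ ∈ 𝒞 there exists a unique regular Borel probability measure μ on the compact Hausdorff space 𝒞̃ (equipped with the weak* topology) such that φ(f) = ∫_{𝒞̃} χ(f) dμ(χ) for every f ∈ ℓ∞. (Note that for each f ∈ ℓ∞ the evaluation map χ ↦ χ(f) is continuous on 𝒞̃.) -/

import Mathlib

/-!
Weak-* compactness of the dual ball turns `𝒞̃` into the set of weak-* cluster points of the
sequence of Cesàro means `M n`, so that closed conditions satisfied by all `M n` pass to `𝒞̃`, and
`C̄(f)` is at most the supremum of `χ(f)` over `χ ∈ 𝒞̃`. The pointwise product of two sequences of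
Cesàro means is again a sequence of Cesàro means of a bounded function, so the evaluations
`χ ↦ χ(f)` form a subalgebra of `C(𝒞̃)`, which is dense by Stone–Weierstrass. A functional dominated
by `C̄` therefore factors through these evaluations and extends uniquely to a positive unital
functional on `C(𝒞̃)`, and the Riesz–Markov–Kakutani theorem applies.
-/

open Filter MeasureTheory Topology

noncomputable section

/-- `ℓ∞`, the bounded (continuous, for the discrete topology) functions `ℕ → ℝ`. -/
abbrev linf : Type := BoundedContinuousFunction ℕ ℝ

/-- `C̄(f) = limsup_{n→∞} (1/n) ∑_{i=1}^n f(i)`. -/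
def Cbar (f : linf) : ℝ :=
  limsup (fun n : ℕ => (1 / (n : ℝ)) * ∑ i ∈ Finset.Icc 1 n, f i) atTop

/-- The class `𝒞`, as a subset of the weak-* dual of `ℓ∞`. -/
def Ccl : Set (WeakDual ℝ linf) := {φ | ∀ f : linf, φ f ≤ Cbar f}

/-- `𝒞̃ = {φ^𝒰 : 𝒰 a free ultrafilter on ℕ}`, with the weak-* topology. -/
def Ctilde : Set (WeakDual ℝ linf) :=
  {φ | ∃ 𝒰 : Ultrafilter ℕ, (𝒰 : Filter ℕ) ≤ Filter.cofinite ∧ ∀ f : linf,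
    φ f = limUnder (𝒰 : Filter ℕ) (fun n : ℕ => (1 / (n : ℝ)) * ∑ i ∈ Finset.Icc 1 n, f i)}

instance : MeasurableSpace Ctilde := borel Ctilde
instance : BorelSpace Ctilde := ⟨rfl⟩

section DenseRange

variable {X E : Type*} [TopologicalSpace X] [CompactSpace X] [AddCommGroup E] [Module ℝ E]
  {T : E →ₗ[ℝ] C(X, ℝ)}

theorem denseRange_of_separatesPoints (h_one : ∃ e, T e = 1)
    (h_mul : ∀ f g, ∃ h, T h = T f * T g) (h_sep : ∀ x y, x ≠ y → ∃ f, T f x ≠ T f y) :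
    DenseRange T := by
  let A : Subalgebra ℝ C(X, ℝ) := T.range.toSubalgebra h_one <| by
    rintro _ _ ⟨f, rfl⟩ ⟨g, rfl⟩
    exact h_mul f g
  have hA : A.SeparatesPoints := fun x y hxy ↦
    let ⟨f, hf⟩ := h_sep x y hxy
    ⟨T f, ⟨T f, ⟨f, rfl⟩, rfl⟩, hf⟩
  intro g
  have hg : g ∈ A.topologicalClosure :=
    ContinuousMap.subalgebra_topologicalClosure_eq_top_of_separatesPoints A hA ▸ Algebra.mem_top
  exact hg

theorem norm_le_of_forall_le {φ : E →ₗ[ℝ] ℝ} (hφ : ∀ f c, (∀ x, T f x ≤ c) → φ f ≤ c) (f : E) :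
    ‖φ f‖ ≤ ‖T f‖ := by
  have le_norm (f : E) : φ f ≤ ‖T f‖ := hφ f _ (T f).apply_le_norm
  refine abs_le'.2 ⟨le_norm f, ?_⟩
  simpa only [map_neg, norm_neg] using le_norm (-f)

theorem le_of_forall_le_of_denseRange {ι : Type*} {T : ι → C(X, ℝ)} (hT : DenseRange T)
    {ψ : C(X, ℝ) →L[ℝ] ℝ} (hψ : ∀ f c, (∀ x, T f x ≤ c) → ψ (T f) ≤ c) {g : C(X, ℝ)} {c : ℝ}
    (hg : ∀ x, g x ≤ c) : ψ g ≤ c := by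
  have approx (f : ι) : ψ (T f) ≤ c + ‖T f - g‖ := hψ f _ fun x ↦ by
    have := (T f - g).apply_le_norm x
    rw [ContinuousMap.sub_apply] at this
    linarith [hg x]
  have extended (h : C(X, ℝ)) : ψ h ≤ c + ‖h - g‖ :=
    hT.induction_on h (isClosed_le (by fun_prop) (by fun_prop)) approx
  simpa only [sub_self, norm_zero, add_zero] using extended g

theorem exists_positive_unital_extension (hT : DenseRange T) {φ : E →ₗ[ℝ] ℝ}
    (hφ : ∀ f c, (∀ x, T f x ≤ c) → φ f ≤ c) :
    ∃ Λ : C(X, ℝ) →ₚ[ℝ] ℝ, Λ 1 = 1 ∧ ∀ f, Λ (T f) = φ f := by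
  let ψ : C(X, ℝ) →L[ℝ] ℝ := φ.extendOfNorm T
  have hψ (f : E) : ψ (T f) = φ f :=
    LinearMap.extendOfNorm_eq hT ⟨1, by simpa only [one_mul] using norm_le_of_forall_le hφ⟩ f
  have ψ_le {g : C(X, ℝ)} {c : ℝ} (hg : ∀ x, g x ≤ c) : ψ g ≤ c :=
    le_of_forall_le_of_denseRange hT (fun f c hf ↦ (hψ f).trans_le (hφ f c hf)) hg
  have le_ψ {g : C(X, ℝ)} {c : ℝ} (hg : ∀ x, c ≤ g x) : c ≤ ψ g := by
    have : ψ (-g) ≤ -c := ψ_le fun x ↦ neg_le_neg (hg x)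
    rwa [map_neg, neg_le_neg_iff] at this
  exact ⟨.mk₀ ψ.toLinearMap fun g hg ↦ le_ψ hg,
    (ψ_le fun _ ↦ le_rfl).antisymm (le_ψ fun _ ↦ le_rfl), hψ⟩

variable [MeasurableSpace X] [BorelSpace X]

theorem continuous_integral_continuousMap (μ : Measure X) [IsFiniteMeasure μ] :
    Continuous fun g : C(X, ℝ) ↦ ∫ x, g x ∂μ := by
  refine (continuous_integral.comp (ContinuousMap.toLp 1 μ ℝ).continuous).congr fun g ↦ ?_
  exact integral_congr_ae (ContinuousMap.coeFn_toLp μ g)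

variable [T2Space X]

theorem exists_regular_isProbabilityMeasure_integral_eq (Λ : C(X, ℝ) →ₚ[ℝ] ℝ) (hΛ : Λ 1 = 1) :
    ∃ μ : Measure X, IsProbabilityMeasure μ ∧ μ.Regular ∧ ∀ g : C(X, ℝ), ∫ x, g x ∂μ = Λ g := by
  let Λc : CompactlySupportedContinuousMap X ℝ →ₚ[ℝ] ℝ :=
    .mk₀
      { toFun := fun g ↦ Λ g.toContinuousMap
        map_add' := fun g h ↦ map_add Λ g.toContinuousMap h.toContinuousMap
        map_smul' := fun c g ↦ map_smul Λ c g.toContinuousMap }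
      fun g hg ↦ Λ.map_nonneg (x := g.toContinuousMap) hg
  have integral_eq (g : C(X, ℝ)) : ∫ x, g x ∂(RealRMK.rieszMeasure Λc) = Λ g :=
    RealRMK.integral_rieszMeasure Λc (CompactlySupportedContinuousMap.continuousMapEquiv g)
  have real_univ : (RealRMK.rieszMeasure Λc).real Set.univ = 1 := by
    simpa [hΛ] using integral_eq 1
  exact ⟨_, ⟨(ENNReal.toReal_eq_one_iff _).1 real_univ⟩, inferInstance, integral_eq⟩

theorem measure_eq_of_integral_eq_of_denseRange {ι : Type*} {T : ι → C(X, ℝ)} (hT : DenseRange T)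
    {μ ν : Measure X} [μ.Regular] [ν.Regular] (h : ∀ f, ∫ x, T f x ∂μ = ∫ x, T f x ∂ν) :
    μ = ν :=
  Measure.ext_of_integral_eq_on_compactlySupported fun g ↦
    hT.induction_on (p := fun g : C(X, ℝ) ↦ ∫ x, g x ∂μ = ∫ x, g x ∂ν) g.toContinuousMap
      (isClosed_eq (continuous_integral_continuousMap μ) (continuous_integral_continuousMap ν)) h

theorem existsUnique_regular_isProbabilityMeasure_of_denseRange (hT : DenseRange T)
    {φ : E →ₗ[ℝ] ℝ} (hφ : ∀ f c, (∀ x, T f x ≤ c) → φ f ≤ c) :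
    ∃! μ : Measure X, IsProbabilityMeasure μ ∧ μ.Regular ∧ ∀ f, φ f = ∫ x, T f x ∂μ := by
  obtain ⟨Λ, hΛ, hΛφ⟩ := exists_positive_unital_extension hT hφ
  obtain ⟨μ, hμ, hμ_reg, hμΛ⟩ := exists_regular_isProbabilityMeasure_integral_eq Λ hΛ
  have hμφ (f : E) : φ f = ∫ x, T f x ∂μ := by rw [hμΛ, hΛφ]
  refine ⟨μ, ⟨hμ, hμ_reg, hμφ⟩, ?_⟩
  rintro ν ⟨-, _, hν⟩
  exact measure_eq_of_integral_eq_of_denseRange hT fun f ↦ (hν f).symm.trans (hμφ f)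

end DenseRange

/-- The evaluations `χ ↦ χ(f)` at vectors `f ∈ E`, as continuous functions on a set `K` of
functionals with the weak-* topology. -/
def evalOn {E : Type*} [AddCommGroup E] [Module ℝ E] [TopologicalSpace E]
    (K : Set (WeakDual ℝ E)) : E →ₗ[ℝ] C(K, ℝ) where
  toFun f := ⟨fun χ ↦ χ.1 f, (WeakDual.eval_continuous f).comp continuous_subtype_val⟩
  map_add' f g := ContinuousMap.ext fun χ ↦ map_add χ.1 f g
  map_smul' c f := ContinuousMap.ext fun χ ↦ map_smul χ.1 c f

/-- The Cesàro mean `f ↦ (1/n) ∑_{i=1}^n f(i)`, as an element of the weak-* dual of `ℓ∞`. The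
convention `1 / 0 = 0` makes it the zero functional for `n = 0`. -/
def cesaroMean (n : ℕ) : WeakDual ℝ linf :=
  StrongDual.toWeakDual
    ((1 / (n : ℝ)) • ∑ i ∈ Finset.Icc 1 n, BoundedContinuousFunction.evalCLM ℝ i)

theorem cesaroMean_apply (n : ℕ) (f : linf) :
    cesaroMean n f = (1 / (n : ℝ)) * ∑ i ∈ Finset.Icc 1 n, f i := by
  rw [cesaroMean, StrongDual.toWeakDual_apply]
  simp

theorem cast_mul_cesaroMean (n : ℕ) (f : linf) :
    n * cesaroMean n f = ∑ i ∈ Finset.Icc 1 n, f i := by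
  rcases eq_or_ne n 0 with rfl | hn
  · simp
  · rw [cesaroMean_apply, ← mul_assoc, mul_one_div_cancel (Nat.cast_ne_zero.2 hn), one_mul]

theorem cast_add_one_mul_cesaroMean_add_one (n : ℕ) (f : linf) :
    ((n : ℝ) + 1) * cesaroMean (n + 1) f = n * cesaroMean n f + f (n + 1) := by
  rw [cast_mul_cesaroMean, ← Finset.sum_Icc_succ_top (Nat.le_add_left 1 n), ← cast_mul_cesaroMean,
    Nat.cast_succ]

theorem abs_cesaroMean_le (n : ℕ) (f : linf) : |cesaroMean n f| ≤ ‖f‖ := by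
  rcases eq_or_ne n 0 with rfl | hn
  · simp [cesaroMean_apply]
  have hn : (0 : ℝ) < n := Nat.cast_pos.2 (Nat.pos_of_ne_zero hn)
  refine le_of_mul_le_mul_left ?_ hn
  calc n * |cesaroMean n f| = |∑ i ∈ Finset.Icc 1 n, f i| := by
        rw [← cast_mul_cesaroMean, abs_mul, abs_of_pos hn]
    _ ≤ ∑ i ∈ Finset.Icc 1 n, |f i| := Finset.abs_sum_le_sum_abs _ _
    _ ≤ ∑ _ ∈ Finset.Icc 1 n, ‖f‖ := Finset.sum_le_sum fun i _ ↦ f.norm_coe_le_norm i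
    _ = n * ‖f‖ := by simp

theorem cesaroMean_mem_closedBall (n : ℕ) :
    cesaroMean n ∈ WeakDual.toStrongDual ⁻¹' Metric.closedBall (0 : StrongDual ℝ linf) 1 := by
  have norm_le : ‖WeakDual.toStrongDual (cesaroMean n)‖ ≤ 1 :=
    ContinuousLinearMap.opNorm_le_bound _ zero_le_one fun f ↦
      (abs_cesaroMean_le n f).trans_eq (one_mul _).symm
  exact (mem_closedBall_zero_iff (E := StrongDual ℝ linf)).2 norm_le

theorem cesaroMean_one {n : ℕ} (hn : n ≠ 0) : cesaroMean n 1 = 1 := by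
  simp [cesaroMean_apply, hn]

theorem mem_Ctilde_iff_mapClusterPt {χ : WeakDual ℝ linf} :
    χ ∈ Ctilde ↔ MapClusterPt χ atTop cesaroMean := by
  rw [mapClusterPt_iff_ultrafilter]
  simp only [Ctilde, Set.mem_ofPred_eq, ← cesaroMean_apply, Nat.cofinite_eq_atTop]
  refine exists_congr fun 𝒰 ↦ and_congr_right fun _ ↦ ?_
  have eq_limUnder {ψ : WeakDual ℝ linf} (hψ : Tendsto cesaroMean 𝒰 (𝓝 ψ)) (f : linf) :
      limUnder (𝒰 : Filter ℕ) (fun n ↦ cesaroMean n f) = ψ f :=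
    (((WeakDual.eval_continuous f).tendsto ψ).comp hψ).limUnder_eq
  refine ⟨fun hχ ↦ ?_, fun hχ f ↦ (eq_limUnder hχ f).symm⟩
  obtain ⟨ψ, -, hψ⟩ := (WeakDual.isCompact_closedBall 0 1).ultrafilter_le_nhds
    (𝒰.map cesaroMean) (tendsto_principal.2 <| .of_forall cesaroMean_mem_closedBall)
  have : χ = ψ := DFunLike.ext _ _ fun f ↦ (hχ f).trans (eq_limUnder hψ f)
  exact this ▸ hψ

theorem mem_of_mem_Ctilde_of_isClosed {χ : WeakDual ℝ linf} (hχ : χ ∈ Ctilde)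
    {K : Set (WeakDual ℝ linf)} (hK : IsClosed K) (h : ∀ᶠ n in atTop, cesaroMean n ∈ K) : χ ∈ K :=
  hK.mem_of_mapClusterPt (mem_Ctilde_iff_mapClusterPt.1 hχ) h

theorem isCompact_Ctilde : IsCompact Ctilde := by
  have isClosed_Ctilde : IsClosed Ctilde := by
    convert isClosed_setOfPred_clusterPt (f := map cesaroMean atTop)
    exact Set.ext fun _ ↦ mem_Ctilde_iff_mapClusterPt
  exact (WeakDual.isCompact_closedBall 0 1).of_isClosed_subset isClosed_Ctilde fun χ hχ ↦
    mem_of_mem_Ctilde_of_isClosed hχ (WeakDual.isClosed_closedBall 0 1)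
      (Eventually.of_forall cesaroMean_mem_closedBall)

instance : CompactSpace Ctilde := isCompact_iff_compactSpace.1 isCompact_Ctilde

theorem Cbar_le_of_forall_mem_Ctilde {f : linf} {c : ℝ} (h : ∀ χ ∈ Ctilde, χ f ≤ c) :
    Cbar f ≤ c := by
  by_contra! hc
  obtain ⟨d, hcd, hd⟩ := exists_between hc
  have frequently_lt : ∃ᶠ n in atTop, d < cesaroMean n f := by
    simp only [Cbar, ← cesaroMean_apply] at hd
    refine frequently_lt_of_lt_limsup (IsBoundedUnder.isCoboundedUnder_le ?_) hd
    exact isBoundedUnder_of ⟨-‖f‖, fun n ↦ (abs_le.1 (abs_cesaroMean_le n f)).1⟩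
  have halfspace_closed : IsClosed {χ : WeakDual ℝ linf | d ≤ χ f} :=
    isClosed_le continuous_const (WeakDual.eval_continuous f)
  obtain ⟨χ, ⟨-, hdχ⟩, hχ⟩ :=
    ((WeakDual.isCompact_closedBall 0 1).inter_right halfspace_closed)
      |>.exists_mapClusterPt_of_frequently
        (frequently_lt.mono fun n hn ↦ ⟨cesaroMean_mem_closedBall n, hn.le⟩)
  exact (hcd.trans_le hdχ).not_ge (h χ (mem_Ctilde_iff_mapClusterPt.2 hχ))

theorem norm_mul_cesaroMean_add_le (f g : linf) (n : ℕ) :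
    ‖f n * cesaroMean n g + cesaroMean (n - 1) f * (g n - cesaroMean n g)‖ ≤ 3 * ‖f‖ * ‖g‖ := by
  have hf : ‖f n‖ ≤ ‖f‖ := f.norm_coe_le_norm n
  have hg : ‖g n‖ ≤ ‖g‖ := g.norm_coe_le_norm n
  have hMf : ‖cesaroMean (n - 1) f‖ ≤ ‖f‖ := abs_cesaroMean_le (n - 1) f
  have hMg : ‖cesaroMean n g‖ ≤ ‖g‖ := abs_cesaroMean_le n g
  calc ‖f n * cesaroMean n g + cesaroMean (n - 1) f * (g n - cesaroMean n g)‖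
      ≤ ‖f n‖ * ‖cesaroMean n g‖ + ‖cesaroMean (n - 1) f‖ * (‖g n‖ + ‖cesaroMean n g‖) := by
        refine (norm_add_le _ _).trans ?_
        rw [norm_mul, norm_mul]
        gcongr
        exact norm_sub_le _ _
    _ ≤ ‖f‖ * ‖g‖ + ‖f‖ * (‖g‖ + ‖g‖) := by gcongr
    _ = 3 * ‖f‖ * ‖g‖ := by ring

/-- The bounded function whose Cesàro means are the products of those of `f` and `g`. With `M` for
the Cesàro means, its value at `n` is the increment `n M_n(f) M_n(g) - (n-1) M_{n-1}(f) M_{n-1}(g)`,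
expanded by `(n-1) (M_n(g) - M_{n-1}(g)) = g(n) - M_n(g)`; its value at `0` enters no Cesàro
mean. -/
def cesaroProd (f g : linf) : linf :=
  .ofNormedAddCommGroupDiscrete _ _ (norm_mul_cesaroMean_add_le f g)

theorem cesaroProd_add_one (f g : linf) (n : ℕ) :
    cesaroProd f g (n + 1) = f (n + 1) * cesaroMean (n + 1) g +
      cesaroMean n f * (g (n + 1) - cesaroMean (n + 1) g) :=
  rfl

theorem cesaroMean_cesaroProd (n : ℕ) (f g : linf) :
    cesaroMean n (cesaroProd f g) = cesaroMean n f * cesaroMean n g := by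
  induction n with
  | zero => simp [cesaroMean_apply]
  | succ n ih =>
    have hn : (n : ℝ) + 1 ≠ 0 := n.cast_add_one_ne_zero
    refine mul_left_cancel₀ hn ?_
    rw [cast_add_one_mul_cesaroMean_add_one, ih, cesaroProd_add_one]
    linear_combination (-cesaroMean (n + 1) g) * cast_add_one_mul_cesaroMean_add_one n f -
      cesaroMean n f * cast_add_one_mul_cesaroMean_add_one n g

theorem map_one_of_mem_Ctilde {χ : WeakDual ℝ linf} (hχ : χ ∈ Ctilde) : χ 1 = 1 :=
  mem_of_mem_Ctilde_of_isClosed hχ (K := {χ | χ 1 = 1})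
    (isClosed_eq (WeakDual.eval_continuous 1) continuous_const)
    ((eventually_ne_atTop 0).mono fun _ ↦ cesaroMean_one)

theorem map_cesaroProd_of_mem_Ctilde {χ : WeakDual ℝ linf} (hχ : χ ∈ Ctilde) (f g : linf) :
    χ (cesaroProd f g) = χ f * χ g :=
  mem_of_mem_Ctilde_of_isClosed hχ (K := {χ | χ (cesaroProd f g) = χ f * χ g})
    (isClosed_eq (WeakDual.eval_continuous _)
      ((WeakDual.eval_continuous f).mul (WeakDual.eval_continuous g)))
    (Eventually.of_forall fun n ↦ cesaroMean_cesaroProd n f g)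

theorem denseRange_evalOn_Ctilde : DenseRange (evalOn Ctilde) :=
  denseRange_of_separatesPoints
    ⟨1, ContinuousMap.ext fun χ ↦ map_one_of_mem_Ctilde χ.2⟩
    (fun f g ↦ ⟨cesaroProd f g, ContinuousMap.ext fun χ ↦ map_cesaroProd_of_mem_Ctilde χ.2 f g⟩)
    fun _ _ hne ↦ DFunLike.ne_iff.1 (Subtype.coe_ne_coe.2 hne)

theorem stmt14_general (φ : linf →ₗ[ℝ] ℝ) (hφ : ∀ f, φ f ≤ Cbar f) :
    ∃! μ : Measure Ctilde, IsProbabilityMeasure μ ∧ μ.Regular ∧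
      ∀ f : linf, φ f = ∫ χ : Ctilde, (χ : WeakDual ℝ linf) f ∂μ :=
  existsUnique_regular_isProbabilityMeasure_of_denseRange denseRange_evalOn_Ctilde fun f _ hf ↦
    (hφ f).trans <| Cbar_le_of_forall_mem_Ctilde fun χ hχ ↦ hf ⟨χ, hχ⟩

/-- Every `φ ∈ 𝒞` is represented by a unique regular Borel probability
measure `μ` on the compact space `𝒞̃`: `φ(f) = ∫_{𝒞̃} χ(f) dμ(χ)` for all `f ∈ ℓ∞`. -/
theorem stmt14 (φ : WeakDual ℝ linf) (hφ : φ ∈ Ccl) :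
    ∃! μ : Measure Ctilde, IsProbabilityMeasure μ ∧ μ.Regular ∧
      ∀ f : linf, φ f = ∫ χ : Ctilde, (χ : WeakDual ℝ linf) f ∂μ :=
  stmt14_general (WeakDual.toStrongDual φ).toLinearMap hφ
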